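/- Let M and N be categories and H : M × N ⥤ Cat a functor, and let π : Grothendieck H ⥤ M be the composite of Grothendieck.forget H with the first projection M × N ⥤ M. Then every morphism of M admits strongly cocartesian lifts along π: for every object X = ((m,n), x) of Grothendieck H and every φ : m ⟶ m' in M, there is a morphism η : X ⟶ X' in Grothendieck H with π(η) = φ such that for every ψ : m' ⟶ m'' and every morphism θ : X ⟶ Z with π(θ) = φ ≫ ψ there exists a unique ρ : X' ⟶ Z with π(ρ) = ψ and η ≫ ρ = θ. (This is the 1-categorical content of the claim in the paper's Proposition 8.6 that the projections of the span associated to a two-variable Cat-valued functor are coCartesian fibrations.) -/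

import Mathlib

/-!
STATEMENT 7: For categories `M`, `N` and a functor `H : M × N ⥤ Cat`, every morphism of `M`
admits strongly cocartesian lifts along the composite
`π = Grothendieck.forget H ⋙ Prod.fst M N : Grothendieck H ⥤ M`.
-/

/-!
A cocartesian lift of `φ : m ⟶ m'` at `X = ((m, n), x)` is the transport morphism of `X` along
`(φ, 𝟙 n)`. Transport morphisms are strongly cocartesian over the base `M × N`
(`grothendieck_existsUnique_toTransport_comp`). For a morphism `θ : X ⟶ Z` over `φ ≫ ψ`, the data
over `M` already determine the base of a factorization of `θ` over `ψ` through the lift: its `M`-component must be `ψ`, and its `N`-component must be that of `θ`, because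
`𝟙 n` is the `N`-component of the lift.
-/

open CategoryTheory

universe v₁ v₂ v₃ u₁ u₂ u₃

variable {M : Type u₁} {N : Type u₂} [Category.{v₁} M] [Category.{v₂} N]

/-- The morphism `X ⟶ X.transport t` is strongly cocartesian for `Grothendieck.forget F`: a morphism
`θ` out of `X` whose base factors as `t ≫ s` factors uniquely through it over `s`. -/
theorem grothendieck_existsUnique_toTransport_comp {C : Type*} [Category C] {F : C ⥤ Cat}
    {X Y : Grothendieck F} {c : C} (t : X.base ⟶ c) (s : c ⟶ Y.base) (θ : X ⟶ Y)
    (h : θ.base = t ≫ s) :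
    ∃! ρ : X.transport t ⟶ Y, ρ.base = s ∧ X.toTransport t ≫ ρ = θ := by
  have hobj : (F.map s).toFunctor.obj ((F.map t).toFunctor.obj X.fiber) =
      (F.map θ.base).toFunctor.obj X.fiber := by
    rw [h, F.map_comp]; rfl
  refine ⟨⟨s, eqToHom hobj ≫ θ.fiber⟩, ⟨rfl, ?_⟩, ?_⟩
  · refine Grothendieck.ext _ _ h.symm ?_
    rw [Grothendieck.comp_fiber]
    erw [CategoryTheory.Functor.map_id, Category.id_comp, eqToHom_trans_assoc,
      eqToHom_trans_assoc, eqToHom_refl, Category.id_comp]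
  · rintro ρ ⟨rfl, rfl⟩
    refine Grothendieck.ext _ _ rfl ?_
    dsimp only
    rw [Grothendieck.comp_fiber]
    erw [CategoryTheory.Functor.map_id, Category.id_comp, eqToHom_trans_assoc,
      eqToHom_refl, Category.id_comp]

/-- Every morphism of `M` admits strongly cocartesian lifts along the projection
`Grothendieck H ⥤ M`: for every object `X` of `Grothendieck H` and every morphism
`φ : π.obj X ⟶ m'` in `M`, there exist an object `X'` and a morphism `η : X ⟶ X'` which is
strongly cocartesian over `φ`. -/
theorem grothendieck_fst_exists_isStronglyCocartesian (H : M × N ⥤ Cat.{v₃, u₃})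
    (X : Grothendieck H) {m' : M}
    (φ : (Grothendieck.forget H ⋙ CategoryTheory.Prod.fst M N).obj X ⟶ m') :
    ∃ (X' : Grothendieck H) (η : X ⟶ X'),
      (Grothendieck.forget H ⋙ CategoryTheory.Prod.fst M N).IsStronglyCocartesian φ η := by
  refine ⟨X.transport (c := (m', X.base.2)) (φ, 𝟙 X.base.2), X.toTransport _, ?_⟩
  refine
    { toIsHomLift := IsHomLift.map (Grothendieck.forget H ⋙ CategoryTheory.Prod.fst M N)
        (X.toTransport (c := (m', X.base.2)) (φ, 𝟙 X.base.2))
      universal_property' := ?_ }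
  intro Y ψ θ hθ
  have hθ₁ : φ ≫ ψ = θ.base.1 :=
    IsHomLift.eq_of_isHomLift (Grothendieck.forget H ⋙ CategoryTheory.Prod.fst M N) (φ ≫ ψ) θ
  obtain ⟨ρ, ⟨hρ, hρθ⟩, huniq⟩ := grothendieck_existsUnique_toTransport_comp (F := H)
    (c := (m', X.base.2)) (φ, 𝟙 X.base.2) (ψ, θ.base.2) θ
    (Prod.ext hθ₁.symm (Category.id_comp _).symm)
  refine ⟨ρ, ⟨?_, hρθ⟩, ?_⟩
  · obtain rfl : ρ.base.1 = ψ := congrArg Prod.fst hρ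
    exact IsHomLift.map (Grothendieck.forget H ⋙ CategoryTheory.Prod.fst M N) ρ
  · rintro ρ' ⟨hρ', rfl⟩
    -- The `N`-component of the lift is an identity, so composing with it preserves that of `ρ'`.
    refine huniq ρ' ⟨Prod.ext ?_ ?_, rfl⟩
    · exact (@IsHomLift.eq_of_isHomLift _ _ _ _
        (Grothendieck.forget H ⋙ CategoryTheory.Prod.fst M N)
        (X.transport (c := (m', X.base.2)) (φ, 𝟙 X.base.2)) _ ψ ρ' hρ').symm
    · exact (Category.id_comp ρ'.base.2).symm
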